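/- Combining the variational formula for relative entropy with the Golden–Thompson inequality: for a density operator ρ, a positive definite density operator σ, a self-adjoint X, and λ > 0, one has tr(ρX) ≤ (1/λ)·D(ρ‖σ) + (1/λ)·log tr(σ·e^{λX}). -/

import Mathlib

open Matrix
open scoped ComplexOrder

/-- Matrix logarithm via the continuous functional calculus (with `Real.log 0 = 0`,
implementing the convention `0·log 0 = 0` on the kernel). -/
noncomputable def mlog {n : ℕ} (M : Matrix (Fin n) (Fin n) ℂ) : Matrix (Fin n) (Fin n) ℂ :=
  cfc Real.log M

/-- Matrix exponential of a Hermitian matrix via the continuous functional calculus. -/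
noncomputable def mexp {n : ℕ} (M : Matrix (Fin n) (Fin n) ℂ) : Matrix (Fin n) (Fin n) ℂ :=
  cfc Real.exp M

/-- Umegaki relative entropy `D(ρ‖σ) = tr(ρ(log ρ − log σ))`. -/
noncomputable def relEnt {n : ℕ} (ρ σ : Matrix (Fin n) (Fin n) ℂ) : ℝ :=
  ((ρ * (mlog ρ - mlog σ)).trace).re

/-!
For a Hermitian matrix `H` and a density matrix `ρ`, Gibbs' variational inequality reads
`tr(ρH) ≤ tr(ρ log ρ) + log tr e^H`. Taking `H = log σ + λX` turns it into
`λ tr(ρX) ≤ D(ρ‖σ) + log tr e^{log σ + λX}`, and Golden–Thompson bounds the last trace by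
`tr(σ e^{λX})`.

Gibbs' inequality is Klein's inequality for `H` shifted by `log tr e^H`; in joint eigenbases Klein's
inequality reduces to the scalar Young inequality `xy ≤ x log x - x + e^y`. Golden–Thompson follows
from the Lie product formula along `m = 2^k`, since
`tr (e^{A/m} e^{B/m})^m ≤ tr (e^{A/m})^m (e^{B/m})^m` when `m` is a power of two.
-/

open Filter NormedSpace Topology

section BanachAlgebra

variable {𝔸 : Type*} [NormedRing 𝔸]

theorem tendsto_natCast_mul_norm_exp_mul_exp_sub_exp_add [NormedAlgebra ℝ 𝔸] [CompleteSpace 𝔸]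
    (a b : 𝔸) :
    Tendsto (fun m : ℕ ↦ m * ‖exp ((m : ℝ)⁻¹ • a) * exp ((m : ℝ)⁻¹ • b)
      - exp ((m : ℝ)⁻¹ • (a + b))‖) atTop (𝓝 0) := by
  have hderiv : HasDerivAt
      (fun t : ℝ ↦ exp (t • a) * exp (t • b) - exp (t • (a + b))) (0 : 𝔸) 0 := by
    have h (c : 𝔸) := hasDerivAt_exp_smul_const c (0 : ℝ)
    exact (((h a).fun_mul (h b)).fun_sub (h (a + b))).congr_deriv (by simp)
  have hinv : Tendsto (fun m : ℕ ↦ (m : ℝ)⁻¹) atTop (𝓝[≠] 0) :=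
    (tendsto_inv_atTop_nhdsGT_zero.comp tendsto_natCast_atTop_atTop).mono_right
      (nhdsWithin_mono _ fun _ ↦ ne_of_gt)
  simpa [Function.comp_def, norm_smul] using (hderiv.tendsto_slope_zero.comp hinv).norm

variable [NormOneClass 𝔸]

theorem norm_pow_sub_pow_le {x y : 𝔸} {M : ℝ} (hx : ‖x‖ ≤ M) (hy : ‖y‖ ≤ M) (m : ℕ) :
    ‖x ^ m - y ^ m‖ ≤ m * M ^ (m - 1) * ‖x - y‖ := by
  induction m with
  | zero => simp
  | succ m ih =>
    have hM : 0 ≤ M := (norm_nonneg x).trans hx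
    calc ‖x ^ (m + 1) - y ^ (m + 1)‖
        = ‖x ^ m * (x - y) + (x ^ m - y ^ m) * y‖ := by congr 1; noncomm_ring
      _ ≤ ‖x‖ ^ m * ‖x - y‖ + ‖x ^ m - y ^ m‖ * ‖y‖ := by
          refine norm_add_le_of_le ((norm_mul_le _ _).trans ?_) (norm_mul_le _ _)
          gcongr
          exact norm_pow_le x m
      _ ≤ M ^ m * ‖x - y‖ + m * M ^ (m - 1) * ‖x - y‖ * M := by gcongr
      _ = ↑(m + 1) * M ^ (m + 1 - 1) * ‖x - y‖ := by
          rcases m with _ | m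
          · simp
          · simp only [Nat.add_sub_cancel]; push_cast; ring

variable [NormedAlgebra ℝ 𝔸]

theorem norm_exp_le_exp_norm (a : 𝔸) : ‖exp a‖ ≤ Real.exp ‖a‖ := by
  rw [exp_eq_tsum ℝ, Real.exp_eq_exp_ℝ, exp_eq_tsum ℝ]
  refine tsum_of_norm_bounded (expSeries_summable' (𝕂 := ℝ) ‖a‖).hasSum fun k ↦ ?_
  rw [norm_smul, smul_eq_mul, Real.norm_of_nonneg (by positivity)]
  gcongr
  exact norm_pow_le a k

theorem lie_product_formula [CompleteSpace 𝔸] (a b : 𝔸) :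
    Tendsto (fun m : ℕ ↦ (exp ((m : ℝ)⁻¹ • a) * exp ((m : ℝ)⁻¹ • b)) ^ m) atTop
      (𝓝 (exp (a + b))) := by
  set x : ℕ → 𝔸 := fun m ↦ exp ((m : ℝ)⁻¹ • a) * exp ((m : ℝ)⁻¹ • b)
  set y : ℕ → 𝔸 := fun m ↦ exp ((m : ℝ)⁻¹ • (a + b))
  set C : ℝ := ‖a‖ + ‖b‖
  have norm_exp_smul_le (m : ℕ) (c : 𝔸) :
      ‖exp ((m : ℝ)⁻¹ • c)‖ ≤ Real.exp ((m : ℝ)⁻¹ * ‖c‖) := by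
    simpa [norm_smul] using norm_exp_le_exp_norm ((m : ℝ)⁻¹ • c)
  have hx (m : ℕ) : ‖x m‖ ≤ Real.exp ((m : ℝ)⁻¹ * C) := by
    rw [mul_add, Real.exp_add]
    exact norm_mul_le_of_le (norm_exp_smul_le m a) (norm_exp_smul_le m b)
  have hy (m : ℕ) : ‖y m‖ ≤ Real.exp ((m : ℝ)⁻¹ * C) :=
    (norm_exp_smul_le m (a + b)).trans (by gcongr; exact norm_add_le a b)
  have hy_pow {m : ℕ} (hm : m ≠ 0) : y m ^ m = exp (a + b) := by
    let +nondep : NormedAlgebra ℚ 𝔸 := .restrictScalars ℚ ℝ 𝔸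
    rw [← NormedSpace.exp_nsmul, ← Nat.cast_smul_eq_nsmul ℝ, smul_inv_smul₀ (by positivity)]
  have hdist {m : ℕ} (hm : m ≠ 0) :
      ‖x m ^ m - exp (a + b)‖ ≤ m * ‖x m - y m‖ * Real.exp C := by
    calc ‖x m ^ m - exp (a + b)‖
        ≤ m * Real.exp ((m : ℝ)⁻¹ * C) ^ (m - 1) * ‖x m - y m‖ := by
          rw [← hy_pow hm]
          exact norm_pow_sub_pow_le (hx m) (hy m) m
      _ ≤ m * Real.exp ((m : ℝ)⁻¹ * C) ^ m * ‖x m - y m‖ := by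
          gcongr
          · exact Real.one_le_exp (by positivity)
          · exact m.sub_le 1
      _ = m * ‖x m - y m‖ * Real.exp C := by
          rw [← Real.exp_nat_mul, mul_inv_cancel_left₀ (by positivity)]
          ring
  refine tendsto_iff_norm_sub_tendsto_zero.mpr <| squeeze_zero' (.of_forall fun _ ↦ norm_nonneg _)
    ((eventually_ne_atTop 0).mono fun m hm ↦ hdist hm) ?_
  simpa only [zero_mul] using
    (tendsto_natCast_mul_norm_exp_mul_exp_sub_exp_add a b).mul_const (Real.exp C)

end BanachAlgebra

section TracePowers

variable {m n 𝕜 : Type*} [Fintype m] [Fintype n] [RCLike 𝕜]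

theorem two_mul_re_trace_mul_le (A : Matrix m n 𝕜) (B : Matrix n m 𝕜) :
    2 * RCLike.re (A * B).trace ≤ RCLike.re (A * Aᴴ).trace + RCLike.re (Bᴴ * B).trace := by
  have hnonneg := (RCLike.nonneg_iff.mp
    (posSemidef_conjTranspose_mul_self (Aᴴ - B)).trace_nonneg).1
  have hconj : RCLike.re (Bᴴ * Aᴴ).trace = RCLike.re (A * B).trace := by
    rw [← conjTranspose_mul, trace_conjTranspose, RCLike.star_def, RCLike.conj_re]
  simp only [conjTranspose_sub, conjTranspose_conjTranspose, Matrix.sub_mul, Matrix.mul_sub,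
    trace_sub, map_sub, hconj] at hnonneg
  linarith

variable [DecidableEq n]

theorem trace_mul_pow_comm {R : Type*} [CommSemiring R] (A B : Matrix n n R) (k : ℕ) :
    ((A * B) ^ k).trace = ((B * A) ^ k).trace := by
  cases k with
  | zero => simp
  | succ k =>
    rw [pow_succ, ← Matrix.mul_assoc, mul_pow_mul, trace_mul_comm, ← Matrix.mul_assoc, pow_succ']

theorem re_trace_conjTranspose_mul_self_pow_mul_le (M : Matrix n n 𝕜) (k : ℕ) :
    RCLike.re ((Mᴴ * M) ^ k * (M * Mᴴ) ^ k).trace ≤ RCLike.re ((Mᴴ * M) ^ (2 * k)).trace := by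
  have h := two_mul_re_trace_mul_le ((Mᴴ * M) ^ k) ((M * Mᴴ) ^ k)
  rw [((isHermitian_conjTranspose_mul_self M).pow k).eq,
    ((isHermitian_mul_conjTranspose_self M).pow k).eq, ← pow_add, ← pow_add, ← two_mul,
    trace_mul_pow_comm M Mᴴ] at h
  linarith

/- The two inequalities are proved together: passing from `M` to `M ^ 2` in the first one produces
the product `(Mᴴ * M) * (M * Mᴴ)` of Hermitian matrices, to which the second one applies. -/
theorem re_trace_pow_two_pow_le_and_re_trace_mul_pow_two_pow_le (k : ℕ) :
    (∀ M : Matrix n n 𝕜,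
      RCLike.re (M ^ 2 ^ (k + 1)).trace ≤ RCLike.re ((Mᴴ * M) ^ 2 ^ k).trace) ∧
    ∀ X Y : Matrix n n 𝕜, X.IsHermitian → Y.IsHermitian →
      RCLike.re ((X * Y) ^ 2 ^ k).trace ≤ RCLike.re (X ^ 2 ^ k * Y ^ 2 ^ k).trace := by
  induction k with
  | zero =>
    refine ⟨fun M ↦ ?_, fun X Y _ _ ↦ by simp⟩
    have h := two_mul_re_trace_mul_le M M
    rw [trace_mul_comm M Mᴴ] at h
    simp only [zero_add, pow_zero, pow_one, pow_two]
    linarith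
  | succ k ih =>
    obtain ⟨ih_pow, ih_mul⟩ := ih
    refine ⟨fun M ↦ ?_, fun X Y hX hY ↦ ?_⟩
    · calc RCLike.re (M ^ 2 ^ (k + 1 + 1)).trace
          = RCLike.re ((M ^ 2) ^ 2 ^ (k + 1)).trace := by rw [← pow_mul, ← pow_succ']
        _ ≤ RCLike.re (((M ^ 2)ᴴ * M ^ 2) ^ 2 ^ k).trace := ih_pow _
        _ = RCLike.re (((Mᴴ * M) * (M * Mᴴ)) ^ 2 ^ k).trace := by
            rw [conjTranspose_pow, pow_two, pow_two, Matrix.mul_assoc Mᴴ, trace_mul_pow_comm]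
            simp only [Matrix.mul_assoc]
        _ ≤ RCLike.re ((Mᴴ * M) ^ 2 ^ k * (M * Mᴴ) ^ 2 ^ k).trace :=
            ih_mul _ _ (isHermitian_conjTranspose_mul_self M) (isHermitian_mul_conjTranspose_self M)
        _ ≤ RCLike.re ((Mᴴ * M) ^ 2 ^ (k + 1)).trace := by
            rw [pow_succ' 2 k]
            exact re_trace_conjTranspose_mul_self_pow_mul_le M (2 ^ k)
    · calc RCLike.re ((X * Y) ^ 2 ^ (k + 1)).trace
          ≤ RCLike.re (((X * Y)ᴴ * (X * Y)) ^ 2 ^ k).trace := ih_pow _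
        _ = RCLike.re ((X ^ 2 * Y ^ 2) ^ 2 ^ k).trace := by
            rw [conjTranspose_mul, hX.eq, hY.eq, Matrix.mul_assoc, trace_mul_pow_comm]
            simp only [pow_two, Matrix.mul_assoc]
        _ ≤ RCLike.re ((X ^ 2) ^ 2 ^ k * (Y ^ 2) ^ 2 ^ k).trace := ih_mul _ _ (hX.pow 2) (hY.pow 2)
        _ = RCLike.re (X ^ 2 ^ (k + 1) * Y ^ 2 ^ (k + 1)).trace := by
            rw [← pow_mul, ← pow_mul, ← pow_succ']

theorem re_trace_mul_pow_two_pow_le {X Y : Matrix n n 𝕜} (hX : X.IsHermitian)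
    (hY : Y.IsHermitian) (k : ℕ) :
    RCLike.re ((X * Y) ^ 2 ^ k).trace ≤ RCLike.re (X ^ 2 ^ k * Y ^ 2 ^ k).trace :=
  (re_trace_pow_two_pow_le_and_re_trace_mul_pow_two_pow_le k).2 X Y hX hY

end TracePowers

section MatrixExponential

variable {n 𝕜 : Type*} [Fintype n] [DecidableEq n] [RCLike 𝕜] {A B : Matrix n n 𝕜}

theorem golden_thompson (hA : A.IsHermitian) (hB : B.IsHermitian) :
    RCLike.re (exp (A + B)).trace ≤ RCLike.re (exp A * exp B).trace := by
  cases isEmpty_or_nonempty n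
  · simp [trace]
  have hlim : Tendsto (fun m : ℕ ↦ (exp ((m : ℝ)⁻¹ • A) * exp ((m : ℝ)⁻¹ • B)) ^ m) atTop
      (𝓝 (exp (A + B))) := by
    open scoped Matrix.Norms.Operator in exact lie_product_formula A B
  have hlim_re := (RCLike.continuous_re.tendsto _).comp
    (((continuous_id.matrix_trace).tendsto _).comp
      (hlim.comp (tendsto_pow_atTop_atTop_of_one_lt one_lt_two)))
  have hpow (C : Matrix n n 𝕜) (k : ℕ) : exp (((2 ^ k : ℕ) : ℝ)⁻¹ • C) ^ 2 ^ k = exp C := by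
    rw [← Matrix.exp_nsmul, ← Nat.cast_smul_eq_nsmul ℝ, smul_inv_smul₀ (by positivity)]
  have hexp {C : Matrix n n 𝕜} (hC : C.IsHermitian) (k : ℕ) :
      (exp (((2 ^ k : ℕ) : ℝ)⁻¹ • C)).IsHermitian := (hC.smul (.all _)).exp
  refine le_of_tendsto hlim_re (.of_forall fun k ↦ ?_)
  simpa only [Function.comp_apply, id, hpow] using
    re_trace_mul_pow_two_pow_le (hexp hA k) (hexp hB k) k

theorem cfc_real_exp (hA : A.IsHermitian) : cfc Real.exp A = exp A := by
  have hdiag : (RCLike.ofReal ∘ Real.exp ∘ hA.eigenvalues : n → 𝕜) =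
      exp (RCLike.ofReal ∘ hA.eigenvalues : n → 𝕜) := by
    ext i
    rw [Pi.coe_exp, Real.exp_eq_exp_ℝ]
    exact algebraMap_exp_comm (hA.eigenvalues i)
  conv_rhs => rw [hA.spectral_theorem]
  rw [hA.cfc_eq, IsHermitian.cfc, hdiag, ← exp_diagonal]
  have hcont : Continuous (Unitary.conjStarAlgAut 𝕜 (Matrix n n 𝕜) hA.eigenvectorUnitary) :=
    (continuous_const.mul continuous_id).mul continuous_const
  open scoped Matrix.Norms.Operator in exact map_exp _ hcont _

theorem exp_cfc_log (hA : A.PosDef) : exp (cfc Real.log A) = A := by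
  have hlog : ContinuousOn Real.log (spectrum ℝ A) := A.finite_real_spectrum.continuousOn _
  have hpos : ∀ x ∈ spectrum ℝ A, 0 < x := by
    rw [hA.1.spectrum_real_eq_range_eigenvalues]
    exact Set.forall_mem_range.2 hA.eigenvalues_pos
  calc exp (cfc Real.log A)
      = cfc Real.exp (cfc Real.log A) := (cfc_real_exp (cfc_predicate _ _)).symm
    _ = cfc (fun x ↦ Real.exp (Real.log x)) A :=
        (cfc_comp' Real.exp Real.log A Real.continuous_exp.continuousOn hlog hA.1).symm
    _ = cfc id A := cfc_congr fun x hx ↦ Real.exp_log (hpos x hx)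
    _ = A := cfc_id ℝ A hA.1

theorem posDef_exp (hA : A.IsHermitian) : (exp A).PosDef := by
  open scoped MatrixOrder in
  have hnonneg : 0 ≤ exp A := cfc_real_exp hA ▸ cfc_nonneg fun x _ ↦ (Real.exp_pos x).le
  exact ((isUnit_exp A).isStrictlyPositive hnonneg).posDef

theorem re_trace_exp_pos [Nonempty n] (hA : A.IsHermitian) : 0 < RCLike.re (exp A).trace :=
  (RCLike.pos_iff.mp (posDef_exp hA).trace_pos).1

theorem exp_sub_smul_one (A : Matrix n n 𝕜) (c : ℝ) :
    exp (A - c • 1) = Real.exp (-c) • exp A := by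
  have hcomm : Commute ((-c) • (1 : Matrix n n 𝕜)) A := (Commute.one_left A).smul_left _
  have hscalar : exp ((-c) • (1 : Matrix n n 𝕜)) = Real.exp (-c) • 1 := by
    rw [Real.exp_eq_exp_ℝ, ← Algebra.algebraMap_eq_smul_one, ← Algebra.algebraMap_eq_smul_one]
    open scoped Matrix.Norms.Operator in exact (algebraMap_exp_comm (-c)).symm
  rw [sub_eq_neg_add, ← neg_smul, Matrix.exp_add_of_commute _ _ hcomm, hscalar, smul_one_mul]

end MatrixExponential

section VariationalFormula

theorem mul_le_mul_log_sub_add_exp {x : ℝ} (hx : 0 ≤ x) (y : ℝ) :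
    x * y ≤ x * Real.log x - x + Real.exp y := by
  rcases hx.eq_or_lt with rfl | hx
  · simpa using (Real.exp_pos y).le
  · have h := mul_le_mul_of_nonneg_left (Real.add_one_le_exp (y - Real.log x)) hx.le
    rw [Real.exp_sub, Real.exp_log hx, mul_div_cancel₀ _ hx.ne'] at h
    linarith

theorem nonempty_of_trace_ne_zero {n R : Type*} [Fintype n] [AddCommMonoid R] {A : Matrix n n R}
    (hA : A.trace ≠ 0) : Nonempty n := by
  contrapose! hA
  simp [trace]

variable {n 𝕜 : Type*} [Fintype n] [DecidableEq n] [RCLike 𝕜]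

/-- The squared overlap `|⟨uᵢ, vⱼ⟩|²` of the `i`-th eigenvector of `A` with the `j`-th eigenvector
of `B`, for the orthonormal eigenbases chosen by `Matrix.IsHermitian.eigenvectorUnitary`. It is the
weight with which the pair of eigenvalues `(aᵢ, bⱼ)` enters `tr (f(A) g(B))`. -/
noncomputable def eigenOverlap {A B : Matrix n n 𝕜} (hA : A.IsHermitian) (hB : B.IsHermitian)
    (i j : n) : ℝ :=
  ‖(star (hA.eigenvectorUnitary : Matrix n n 𝕜) * hB.eigenvectorUnitary) i j‖ ^ 2

theorem re_trace_cfc_mul_cfc {A B : Matrix n n 𝕜} (hA : A.IsHermitian) (hB : B.IsHermitian)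
    (f g : ℝ → ℝ) :
    RCLike.re (cfc f A * cfc g B).trace =
      ∑ i, ∑ j, eigenOverlap hA hB i j * (f (hA.eigenvalues i) * g (hB.eigenvalues j)) := by
  set U : Matrix n n 𝕜 := ↑hA.eigenvectorUnitary with hU
  set V : Matrix n n 𝕜 := ↑hB.eigenvectorUnitary with hV
  set W : Matrix n n 𝕜 := star U * V with hW
  set D : Matrix n n 𝕜 := diagonal (RCLike.ofReal ∘ f ∘ hA.eigenvalues) with hD
  set E : Matrix n n 𝕜 := diagonal (RCLike.ofReal ∘ g ∘ hB.eigenvalues) with hE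
  have hcyc : (cfc f A * cfc g B).trace = (D * W * (E * Wᴴ)).trace := by
    simp only [hA.cfc_eq, hB.cfc_eq, IsHermitian.cfc, Unitary.conjStarAlgAut_apply, ← hU, ← hV,
      ← hD, ← hE, hW, star_eq_conjTranspose, conjTranspose_mul, conjTranspose_conjTranspose]
    rw [Matrix.mul_assoc, Matrix.mul_assoc, trace_mul_comm]
    simp only [Matrix.mul_assoc]
  have hentry (i j : n) : (D * W) i j * (E * Wᴴ) j i =
      ((f (hA.eigenvalues i) * g (hB.eigenvalues j) : ℝ) : 𝕜) * (W i j * star (W i j)) := by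
    simp only [hD, hE, diagonal_mul, conjTranspose_apply, Function.comp_apply]
    push_cast
    ring
  rw [hcyc, trace, map_sum]
  refine Finset.sum_congr rfl fun i _ ↦ ?_
  rw [diag_apply, mul_apply, map_sum]
  refine Finset.sum_congr rfl fun j _ ↦ ?_
  rw [hentry, RCLike.re_ofReal_mul, RCLike.star_def, RCLike.mul_conj, ← RCLike.ofReal_pow,
    RCLike.ofReal_re, mul_comm, eigenOverlap]

theorem klein_inequality {A H : Matrix n n 𝕜} (hA : A.PosSemidef) (hH : H.IsHermitian) :
    RCLike.re (A * H).trace ≤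
      RCLike.re (A * cfc Real.log A).trace - RCLike.re A.trace + RCLike.re (exp H).trace := by
  have hid {B : Matrix n n 𝕜} (hB : B.IsHermitian) : cfc (fun x : ℝ ↦ x) B = B := cfc_id' ℝ B hB
  have hone {B : Matrix n n 𝕜} (hB : B.IsHermitian) : cfc (fun _ : ℝ ↦ 1) B = 1 :=
    cfc_const_one ℝ B hB
  have hmul : cfc (fun x ↦ x * Real.log x) A = A * cfc Real.log A := by
    rw [cfc_mul _ _ A (hg := A.finite_real_spectrum.continuousOn _), hid hA.1]
  have h_joint := re_trace_cfc_mul_cfc hA.1 hH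
  have hAH := h_joint (fun x ↦ x) (fun y ↦ y)
  have hlog := h_joint (fun x ↦ x * Real.log x) (fun _ ↦ 1)
  have htrace := h_joint (fun x ↦ x) (fun _ ↦ 1)
  have hexp := h_joint (fun _ ↦ 1) Real.exp
  rw [hid hA.1, hid hH] at hAH
  rw [hmul, hone hH, mul_one] at hlog
  rw [hid hA.1, hone hH, mul_one] at htrace
  rw [hone hA.1, one_mul, cfc_real_exp hH] at hexp
  rw [hAH, hlog, htrace, hexp]
  simp only [← Finset.sum_sub_distrib, ← Finset.sum_add_distrib, ← mul_sub, ← mul_add, mul_one,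
    one_mul]
  gcongr with i _ j _
  · exact sq_nonneg _
  · exact mul_le_mul_log_sub_add_exp (hA.eigenvalues_nonneg i) _

theorem gibbs_variational_inequality {ρ H : Matrix n n 𝕜} (hρ : ρ.PosSemidef)
    (hρtr : ρ.trace = 1) (hH : H.IsHermitian) :
    RCLike.re (ρ * H).trace ≤
      RCLike.re (ρ * cfc Real.log ρ).trace + Real.log (RCLike.re (exp H).trace) := by
  have : Nonempty n := nonempty_of_trace_ne_zero (hρtr ▸ one_ne_zero)
  set Z := RCLike.re (exp H).trace with hZ
  have hZpos : 0 < Z := re_trace_exp_pos hH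
  have hshift : (H - Real.log Z • 1).IsHermitian := hH.sub (isHermitian_one.smul (.all _))
  have hklein := klein_inequality hρ hshift
  have hexp : RCLike.re (exp (H - Real.log Z • 1)).trace = 1 := by
    rw [exp_sub_smul_one, trace_smul, RCLike.smul_re, ← hZ, Real.exp_neg, Real.exp_log hZpos,
      inv_mul_cancel₀ hZpos.ne']
  rw [hexp, Matrix.mul_sub, mul_smul_one, trace_sub, trace_smul, map_sub, RCLike.smul_re, hρtr,
    RCLike.one_re] at hklein
  linarith

theorem variational_golden_thompson_general (ρ σ X : Matrix n n 𝕜)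
    (hρ : ρ.PosSemidef) (hρtr : ρ.trace = 1) (hσ : σ.PosDef) (hX : X.IsHermitian)
    (l : ℝ) (hl : 0 < l) :
    RCLike.re (ρ * X).trace ≤
      (1 / l) * RCLike.re (ρ * (cfc Real.log ρ - cfc Real.log σ)).trace +
        (1 / l) * Real.log (RCLike.re (σ * exp (l • X)).trace) := by
  have : Nonempty n := nonempty_of_trace_ne_zero (hρtr ▸ one_ne_zero)
  have hlog : (cfc Real.log σ).IsHermitian := cfc_predicate _ _
  have hlX : (l • X).IsHermitian := hX.smul (.all l)
  have hgibbs := gibbs_variational_inequality hρ hρtr (hlog.add hlX)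
  have hgt : RCLike.re (exp (cfc Real.log σ + l • X)).trace ≤
      RCLike.re (σ * exp (l • X)).trace := by
    simpa only [exp_cfc_log hσ] using golden_thompson hlog hlX
  have hlog_le := Real.log_le_log (re_trace_exp_pos (hlog.add hlX)) hgt
  rw [Matrix.mul_add, Matrix.mul_smul, trace_add, trace_smul, map_add, RCLike.smul_re] at hgibbs
  rw [← mul_add, one_div, ← div_eq_inv_mul, le_div_iff₀' hl, Matrix.mul_sub, trace_sub, map_sub]
  linarith

end VariationalFormula

/-- Variational formula combined with Golden–Thompson:
`tr(ρX) ≤ (1/λ)D(ρ‖σ) + (1/λ) log tr(σ e^{λX})`. -/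
theorem variational_golden_thompson {n : ℕ} (ρ σ X : Matrix (Fin n) (Fin n) ℂ)
    (hρ : ρ.PosSemidef) (hρtr : ρ.trace = 1)
    (hσ : σ.PosDef) (hσtr : σ.trace = 1)
    (hX : X.IsHermitian) (l : ℝ) (hl : 0 < l) :
    ((ρ * X).trace).re ≤
      (1 / l) * relEnt ρ σ +
        (1 / l) * Real.log (((σ * mexp ((l : ℂ) • X)).trace).re) := by
  rw [Complex.coe_smul, mexp, cfc_real_exp (hX.smul (.all l))]
  exact variational_golden_thompson_general ρ σ X hρ hρtr hσ hX l hl
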